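/- arXiv:1811.11601 — 4 statements merged into one kernel-verified Lean document; each statement's English description precedes it below -/
import Mathlib

section
/- Let H be a real inner product space, g : H → H, s a positive integer, A = (a_{ij}) an s×s real matrix, b ∈ ℝ^s, and Δt ∈ ℝ. Suppose u₀, u₁, …, u_s ∈ H satisfy the Runge–Kutta stage equations u_i = u₀ + Δt·Σ_{j=1}^s a_{ij} g(u_j) for i = 1, …, s, and set u₊ = u₀ + Δt·Σ_{i=1}^s b_i g(u_i). Then ‖u₊‖² − ‖u₀‖² = 2Δt·Σ_{i=1}^s b_i ⟨u_i, g(u_i)⟩ + Δt²·Σ_{i,j=1}^s (b_i b_j − b_i a_{ij} − b_j a_{ji}) ⟨g(u_i), g(u_j)⟩. -/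
/-!
Expanding the square gives
`‖u₊‖² − ‖u₀‖² = 2Δt ∑ i, b i ⟪u₀, g (u i)⟫ + Δt² ∑ i j, b i b j ⟪g (u i), g (u j)⟫`.
Pairing the `i`-th stage equation with `g (u i)` replaces `u₀` by `u i` at the cost of
`−2Δt² ∑ i j, b i A i j ⟪g (u i), g (u j)⟫`; by symmetry of the inner product this double sum
equals the one with `i` and `j` exchanged, which yields the symmetrized coefficients.
-/

open scoped RealInnerProductSpace

/-- Energy identity for a general `s`-stage Runge–Kutta step:
if the stages satisfy `u i = u₀ + Δt • ∑ j, A i j • g (u j)` and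
`u₊ = u₀ + Δt • ∑ i, b i • g (u i)`, then
`‖u₊‖² − ‖u₀‖² = 2Δt ∑ i, b i ⟪u i, g (u i)⟫
  + Δt² ∑ i j, (b i b j − b i A i j − b j A j i) ⟪g (u i), g (u j)⟫`. -/
theorem rungeKutta_energy_identity
    {H : Type*} [NormedAddCommGroup H] [InnerProductSpace ℝ H]
    (g : H → H) (s : ℕ) (hs : 0 < s)
    (A : Fin s → Fin s → ℝ) (b : Fin s → ℝ) (Δt : ℝ)
    (u₀ : H) (u : Fin s → H)
    (hstage : ∀ i, u i = u₀ + Δt • ∑ j, A i j • g (u j)) :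
    ‖u₀ + Δt • ∑ i, b i • g (u i)‖ ^ 2 - ‖u₀‖ ^ 2
      = 2 * Δt * ∑ i, b i * ⟪u i, g (u i)⟫
        + Δt ^ 2 * ∑ i, ∑ j,
            (b i * b j - b i * A i j - b j * A j i) * ⟪g (u i), g (u j)⟫ := by
  have hu : ∀ i, ⟪u i, g (u i)⟫
      = ⟪u₀, g (u i)⟫ + Δt * ∑ j, A i j * ⟪g (u i), g (u j)⟫ := by
    intro i
    -- Only the first slot is expanded: the `u i` inside `g (u i)` must stay.
    generalize hk : g (u i) = k
    rw [hstage i, inner_add_left, real_inner_smul_left, real_inner_comm _ (∑ j, _),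
      inner_sum]
    simp only [real_inner_smul_right]
  have hD : ⟪u₀, ∑ i, b i • g (u i)⟫ = ∑ i, b i * ⟪u₀, g (u i)⟫ := by
    simp only [inner_sum, real_inner_smul_right]
  have hN : ‖∑ i, b i • g (u i)‖ ^ 2
      = ∑ i, ∑ j, b i * b j * ⟪g (u i), g (u j)⟫ := by
    rw [← real_inner_self_eq_norm_sq]
    simp only [sum_inner, inner_sum, real_inner_smul_left, real_inner_smul_right,
      mul_assoc]
    refine Finset.sum_congr rfl fun i _ => Finset.sum_congr rfl fun j _ => ?_
    rw [real_inner_comm]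
  have hS : ∑ i, b i * ⟪u i, g (u i)⟫
      = ∑ i, b i * ⟪u₀, g (u i)⟫
        + Δt * ∑ i, ∑ j, b i * A i j * ⟪g (u i), g (u j)⟫ := by
    simp only [hu, Finset.mul_sum, mul_add, Finset.sum_add_distrib]
    congr 1
    refine Finset.sum_congr rfl fun i _ => Finset.sum_congr rfl fun j _ => ?_
    ring
  have hT : ∑ i, ∑ j, b j * A j i * ⟪g (u i), g (u j)⟫
      = ∑ i, ∑ j, b i * A i j * ⟪g (u i), g (u j)⟫ := by
    rw [Finset.sum_comm]
    refine Finset.sum_congr rfl fun i _ => Finset.sum_congr rfl fun j _ => ?_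
    rw [real_inner_comm]
  rw [norm_add_sq_real, norm_smul, mul_pow, Real.norm_eq_abs, sq_abs, real_inner_smul_right,
    hD, hN, hS]
  simp only [sub_mul, Finset.sum_sub_distrib]
  rw [hT]
  ring
end

section
/- Let H be a real vector space, g : H → H, Δt_E > 0, and η : H → ℝ a convex function such that η(v + h·g(v)) ≤ η(v) for all v ∈ H and all h ∈ (0, Δt_E]. Consider the two-stage explicit Runge–Kutta method with a₂₁ = 3/2, b₁ = b₂ = 1/2, i.e. u₂ = u₀ + (3/2)Δt·g(u₀) and u₊ = u₀ + (Δt/2)·g(u₀) + (Δt/2)·g(u₂). Then u₊ = (3/4)·(u₀ + (Δt/6)·g(u₀)) + (1/4)·(u₂ + 2Δt·g(u₂)), and consequently η(u₊) ≤ η(u₀) for all Δt ∈ (0, Δt_E/2]. -/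
/-- The two-stage explicit Runge–Kutta method with
`a₂₁ = 3/2`, `b₁ = b₂ = 1/2` can be written as a convex combination of
explicit Euler steps (with step sizes `Δt/6` and `2Δt`), and consequently it
does not increase any convex functional `η` that is not increased by explicit
Euler steps with step sizes in `(0, Δt_E]`, provided `Δt ∈ (0, Δt_E/2]`. -/
theorem ssp_two_stage_first_order_convex_combination
    {H : Type*} [AddCommGroup H] [Module ℝ H]
    (g : H → H) (ΔtE : ℝ) (hΔtE : 0 < ΔtE)
    (η : H → ℝ) (hη : ConvexOn ℝ Set.univ η)
    (heuler : ∀ v : H, ∀ h : ℝ, 0 < h → h ≤ ΔtE → η (v + h • g v) ≤ η v)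
    (u₀ : H) (Δt : ℝ) :
    (u₀ + (Δt / 2) • g u₀ + (Δt / 2) • g (u₀ + (3 / 2 * Δt) • g u₀)
        = (3 / 4 : ℝ) • (u₀ + (Δt / 6) • g u₀)
          + (1 / 4 : ℝ) • ((u₀ + (3 / 2 * Δt) • g u₀)
              + (2 * Δt) • g (u₀ + (3 / 2 * Δt) • g u₀)))
    ∧ (0 < Δt → Δt ≤ ΔtE / 2 →
        η (u₀ + (Δt / 2) • g u₀ + (Δt / 2) • g (u₀ + (3 / 2 * Δt) • g u₀))
          ≤ η u₀) := by
  have key : u₀ + (Δt / 2) • g u₀ + (Δt / 2) • g (u₀ + (3 / 2 * Δt) • g u₀)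
        = (3 / 4 : ℝ) • (u₀ + (Δt / 6) • g u₀)
          + (1 / 4 : ℝ) • ((u₀ + (3 / 2 * Δt) • g u₀)
              + (2 * Δt) • g (u₀ + (3 / 2 * Δt) • g u₀)) := by
    module
  refine ⟨key, fun hpos hle => ?_⟩
  rw [key]
  have hconv := hη.2 (Set.mem_univ (u₀ + (Δt / 6) • g u₀))
    (Set.mem_univ ((u₀ + (3 / 2 * Δt) • g u₀)
      + (2 * Δt) • g (u₀ + (3 / 2 * Δt) • g u₀)))
    (by norm_num : (0 : ℝ) ≤ 3 / 4) (by norm_num : (0 : ℝ) ≤ 1 / 4) (by norm_num)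
  simp only [smul_eq_mul] at hconv
  have h₁ := heuler u₀ (Δt / 6) (by linarith) (by linarith)
  have h₂ := heuler u₀ (3 / 2 * Δt) (by linarith) (by linarith)
  -- The largest Euler step, `2 * Δt`, is the one that forces `Δt ≤ ΔtE / 2`.
  have h₃ := heuler (u₀ + (3 / 2 * Δt) • g u₀) (2 * Δt) (by linarith) (by linarith)
  linarith
end

section
/- Let a₂₁, a₃₁, a₃₂, b₁, b₂, b₃ be real coefficients of an explicit three-stage Runge–Kutta method satisfying the third-order conditions b₁ + b₂ + b₃ = 1, b₂a₂₁ + b₃(a₃₁ + a₃₂) = 1/2, b₂a₂₁² + b₃(a₃₁ + a₃₂)² = 1/3, and b₃a₃₂a₂₁ = 1/6. Suppose the method is strongly stable for all semibounded Lipschitz-continuous right-hand sides, in the following sense: for every L > 0 there exists τ > 0 such that for every g : ℝ² → ℝ² with ⟨u, g(u)⟩ ≤ 0 for all u and Lipschitz constant at most L, every u₀ ∈ ℝ², and every Δt ∈ (0, τ], the step from u₀ satisfies ‖u₊‖ ≤ ‖u₀‖. Then 7/8 ≤ a₃₁ + a₃₂ ≤ 5/4. -/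
/-!
Test the method on planar rotation fields `g u = ω(u) J u`, where `J` is the rotation by a right
angle and `ω` is a scalar Lipschitz function. Such a field is orthogonal to `u`, hence semibounded,
and taking `ω = 1` plus a cone of radius `ρ h` and slope `s` around a chosen point `p`
(`bumpField`) keeps the Lipschitz constant independent of the step size `h`, while changing the
value of `ω` at `p` by `h x`, `x = s ρ`. If `p` is the only stage within the cone, the step starting
at `(1, 0)` is an explicit polynomial in `h`; by the order conditions its squared norm is
`1 + 2 x (β - q) h ^ 3 + (β ^ 2 x ^ 2 - 1 / 12) h ^ 4 + ⋯` for some constants `β`, `q` depending on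
the method. As `x` is arbitrary, the step is expansive for small `h` unless `β = q = 0` (`growth`).

* If `a31 + a32 ≠ 0`, the cone is put at the initial value, giving `β = b1` and `q = 1/2 - b3 a32`
  (`case_start`). Stability thus forces `b1 = 0` and `b3 a32 = 1/2`, and the order conditions then
  give `a31 + a32 = 1`.
* If `a31 + a32 = 0`, the order conditions give `a21 = 2/3` and `b2 = 3/4`, and the cone is put at
  the second stage, giving `β = q = 3/4` (`case_second`), so the method is never stable.
-/

open scoped RealInnerProductSpace

/-- One step of an explicit three-stage Runge–Kutta method with Butcher
coefficients `a21, a31, a32, b1, b2, b3` applied to the autonomous ODE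
`u' = g u` with step size `Δt` from `u0`. -/
noncomputable def rk3Step (a21 a31 a32 b1 b2 b3 : ℝ)
    (g : EuclideanSpace ℝ (Fin 2) → EuclideanSpace ℝ (Fin 2)) (Δt : ℝ)
    (u0 : EuclideanSpace ℝ (Fin 2)) : EuclideanSpace ℝ (Fin 2) :=
  let u1 := u0
  let u2 := u0 + Δt • (a21 • g u1)
  let u3 := u0 + Δt • (a31 • g u1 + a32 • g u2)
  u0 + Δt • (b1 • g u1 + b2 • g u2 + b3 • g u3)

/-- The rotation of the plane by a right angle. -/
noncomputable def rotJ (u : EuclideanSpace ℝ (Fin 2)) : EuclideanSpace ℝ (Fin 2) :=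
  !₂[-u 1, u 0]

lemma norm_sq_two (u : EuclideanSpace ℝ (Fin 2)) : ‖u‖ ^ 2 = u 0 ^ 2 + u 1 ^ 2 := by
  rw [EuclideanSpace.real_norm_sq_eq, Fin.sum_univ_two]

lemma norm_rotJ (u : EuclideanSpace ℝ (Fin 2)) : ‖rotJ u‖ = ‖u‖ := by
  have h : ‖rotJ u‖ ^ 2 = ‖u‖ ^ 2 := by
    rw [norm_sq_two, norm_sq_two]; simp [rotJ]; ring
  exact (sq_eq_sq₀ (norm_nonneg _) (norm_nonneg _)).1 h

lemma rotJ_sub (u v : EuclideanSpace ℝ (Fin 2)) : rotJ u - rotJ v = rotJ (u - v) := by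
  ext i; fin_cases i <;> simp [rotJ]; ring

/-- The cone of slope `1`, height `r` and radius `r` centred at `p`. -/
noncomputable def bump (r : ℝ) (p u : EuclideanSpace ℝ (Fin 2)) : ℝ := max 0 (r - ‖u - p‖)

lemma bump_sub_le (r : ℝ) (p u v : EuclideanSpace ℝ (Fin 2)) :
    |bump r p u - bump r p v| ≤ ‖u - v‖ := by
  unfold bump
  refine (abs_max_sub_max_le_max _ _ _ _).trans ?_
  have h := abs_norm_sub_norm_le (u - p) (v - p)
  rw [sub_sub_sub_cancel_right, abs_sub_comm] at h
  rw [sub_self, abs_zero, sub_sub_sub_cancel_left]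
  exact max_le (norm_nonneg _) h

/-- The rotation field `ω(u) J u` whose angular velocity is `1` plus `s` times a cone. -/
noncomputable def bumpField (s r : ℝ) (p u : EuclideanSpace ℝ (Fin 2)) :
    EuclideanSpace ℝ (Fin 2) := (1 + s * bump r p u) • rotJ u

lemma inner_bumpField (s r : ℝ) (p u : EuclideanSpace ℝ (Fin 2)) :
    ⟪u, bumpField s r p u⟫ ≤ 0 := by
  apply le_of_eq
  simp [bumpField, rotJ, PiLp.inner_apply, Fin.sum_univ_two]
  ring

lemma bump_rotJ_sub_le {r : ℝ} {p : EuclideanSpace ℝ (Fin 2)} (hr1 : r ≤ 1)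
    (hp : ‖p‖ ≤ 2) (u v : EuclideanSpace ℝ (Fin 2)) :
    ‖bump r p u • rotJ u - bump r p v • rotJ v‖ ≤ 4 * ‖u - v‖ := by
  have hle : ∀ w, |bump r p w| ≤ 1 := fun w => by
    unfold bump
    rw [abs_of_nonneg (le_max_left _ _)]
    exact max_le zero_le_one (by linarith [norm_nonneg (w - p)])
  -- The cone is supported in the ball of radius `3`, where `J` is bounded.
  have hsupp : ∀ w, bump r p w = 0 ∨ ‖w‖ ≤ 3 := fun w => by
    by_cases h : r ≤ ‖w - p‖
    · left; unfold bump; exact max_eq_left (by linarith)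
    · right
      have := norm_add_le (w - p) p
      rw [sub_add_cancel] at this
      linarith
  have hlip := bump_sub_le r p u v
  have hn := norm_nonneg (u - v)
  rcases hsupp v with hv | hv
  · rcases hsupp u with hu | hu
    · simp [hu, hv]
    · rw [hv, sub_zero] at hlip
      rw [hv, zero_smul, sub_zero, norm_smul, norm_rotJ, Real.norm_eq_abs]
      nlinarith [norm_nonneg u, abs_nonneg (bump r p u)]
  · have e : bump r p u • rotJ u - bump r p v • rotJ v
        = bump r p u • rotJ (u - v) + (bump r p u - bump r p v) • rotJ v := by
      rw [← rotJ_sub, smul_sub, sub_smul]; abel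
    rw [e]
    refine (norm_add_le _ _).trans ?_
    rw [norm_smul, norm_smul, norm_rotJ, norm_rotJ, Real.norm_eq_abs, Real.norm_eq_abs]
    have h1 := mul_le_mul_of_nonneg_right (hle u) hn
    have h2 := mul_le_mul hlip hv (norm_nonneg v) hn
    linarith

lemma bumpField_lipschitz (s : ℝ) {r : ℝ} {p : EuclideanSpace ℝ (Fin 2)}
    (hr1 : r ≤ 1) (hp : ‖p‖ ≤ 2) (u v : EuclideanSpace ℝ (Fin 2)) :
    ‖bumpField s r p u - bumpField s r p v‖ ≤ (1 + 4 * |s|) * ‖u - v‖ := by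
  have e : bumpField s r p u - bumpField s r p v
      = rotJ (u - v) + s • (bump r p u • rotJ u - bump r p v • rotJ v) := by
    rw [← rotJ_sub]; unfold bumpField; module
  rw [e]
  refine (norm_add_le _ _).trans ?_
  rw [norm_smul, norm_rotJ, Real.norm_eq_abs]
  have := mul_le_mul_of_nonneg_left (bump_rotJ_sub_le hr1 hp u v) (abs_nonneg s)
  linarith

lemma bumpField_self (s : ℝ) {r : ℝ} (hr : 0 ≤ r) (a b : ℝ) :
    bumpField s r !₂[a, b] !₂[a, b] = !₂[-((1 + s * r) * b), (1 + s * r) * a] := by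
  ext i; fin_cases i <;> simp [bumpField, bump, rotJ, hr]

/-- Outside the cone the field is the plain rotation; the distance is bounded below by that of the
second coordinates. -/
lemma bumpField_far (s : ℝ) {r a b c d : ℝ} (h : r ≤ |d - b|) :
    bumpField s r !₂[a, b] !₂[c, d] = !₂[-d, c] := by
  have hn := PiLp.norm_apply_le (!₂[c, d] - !₂[a, b] : EuclideanSpace ℝ (Fin 2)) 1
  have h0 : bump r !₂[a, b] !₂[c, d] = 0 := by
    unfold bump
    apply max_eq_left
    simp only [PiLp.sub_apply, Real.norm_eq_abs] at hn
    simp at hn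
    linarith
  unfold bumpField
  rw [h0]
  ext i; fin_cases i <;> simp [rotJ]

/-- For suitable `x`, the squared norm of the perturbed step exceeds `1` for all small `h`:
its expansion is `1 + 2 x (β - q) h ^ 3 + (β ^ 2 x ^ 2 - 1 / 12) h ^ 4 + ⋯`. -/
lemma growth (β q : ℝ) (hβ : β ≠ 0 ∨ β ≠ q) : ∃ x h₀ : ℝ, 0 < h₀ ∧ ∀ h, 0 < h → h ≤ h₀ →
    1 < (1 - h ^ 2 * (1 / 2 + h * x * q)) ^ 2
      + (h * (1 + β * (h * x) - h ^ 2 * (1 + h * x) / 6)) ^ 2 := by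
  -- Subtract `1`, divide by `h ^ 2`, and drop the nonnegative term `h ^ 2 * (1 / 2 + h x q) ^ 2`.
  have key : ∀ x h : ℝ, 0 < h →
      0 < 2 * h * (x * (β - q)) - h ^ 2 * (1 + h * x) / 3
        + (β * (h * x) - h ^ 2 * (1 + h * x) / 6) ^ 2 →
      1 < (1 - h ^ 2 * (1 / 2 + h * x * q)) ^ 2
        + (h * (1 + β * (h * x) - h ^ 2 * (1 + h * x) / 6)) ^ 2 := by
    intro x h hh H
    have := mul_pos (pow_pos hh 2) H
    nlinarith [sq_nonneg (h ^ 2 * (1 / 2 + h * x * q))]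
  have small : ∀ x : ℝ, 0 < min 1 (1 / (1 + |x|)) ∧ ∀ h, 0 < h → h ≤ min 1 (1 / (1 + |x|)) →
      h ≤ 1 ∧ h * x ≤ 1 ∧ -1 ≤ h * x := by
    intro x
    have hx : 0 < 1 + |x| := by positivity
    refine ⟨by positivity, fun h hh hle => ?_⟩
    have h2 := (le_div_iff₀ hx).1 (hle.trans (min_le_right _ _))
    have h3 : |h * x| ≤ 1 := by rw [abs_mul, abs_of_pos hh]; linarith
    exact ⟨hle.trans (min_le_left _ _), (abs_le.1 h3).2, (abs_le.1 h3).1⟩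
  by_cases hq : β = q
  · have hb : β ≠ 0 := by
      rcases hβ with h | h
      · exact h
      · exact absurd hq h
    -- The cubic term vanishes; `β x = 2` makes the quartic coefficient `4 - 1 / 12` positive.
    refine ⟨2 / β, _, (small (2 / β)).1, fun h hh hle => key _ _ hh ?_⟩
    obtain ⟨s1, s2, s3⟩ := (small (2 / β)).2 h hh hle
    have e : β * (h * (2 / β)) = 2 * h := by field_simp
    rw [e, ← hq]
    set y := h * (2 / β)
    have t1 : h ^ 2 * (1 + y) ≤ h ^ 2 * 2 := mul_le_mul_of_nonneg_left (by linarith) (by positivity)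
    have t2 : h ^ 2 ≤ h := by nlinarith
    have t3 : h ≤ 2 * h - h ^ 2 * (1 + y) / 6 := by linarith
    have t4 := pow_le_pow_left₀ hh.le t3 2
    have t5 : 0 < h ^ 2 := by positivity
    have t6 : 2 * h * (2 / β * (β - β)) = 0 := by ring
    rw [t6]
    linarith
  · have hd : β - q ≠ 0 := sub_ne_zero.2 hq
    -- The cubic coefficient is `2` for this choice.
    refine ⟨1 / (β - q), _, (small (1 / (β - q))).1, fun h hh hle => key _ _ hh ?_⟩
    obtain ⟨s1, s2, s3⟩ := (small (1 / (β - q))).2 h hh hle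
    have e : 1 / (β - q) * (β - q) = 1 := by field_simp
    rw [e]
    set y := h * (1 / (β - q))
    have t1 : h ^ 2 * (1 + y) ≤ h ^ 2 * 2 := mul_le_mul_of_nonneg_left (by linarith) (by positivity)
    have t2 : h ^ 2 ≤ h := by nlinarith
    nlinarith [sq_nonneg (β * y - h ^ 2 * (1 + y) / 6)]

/-- Strong stability, quantified exactly as in the theorem. -/
def StronglyStable (a21 a31 a32 b1 b2 b3 : ℝ) : Prop :=
  ∀ L : ℝ, 0 < L → ∃ τ : ℝ, 0 < τ ∧
    ∀ g : EuclideanSpace ℝ (Fin 2) → EuclideanSpace ℝ (Fin 2),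
      (∀ u, ⟪u, g u⟫ ≤ 0) →
      (∀ u v, ‖g u - g v‖ ≤ L * ‖u - v‖) →
      ∀ u₀ : EuclideanSpace ℝ (Fin 2), ∀ Δt : ℝ, 0 < Δt → Δt ≤ τ →
        ‖rk3Step a21 a31 a32 b1 b2 b3 g Δt u₀‖ ≤ ‖u₀‖

/-- Arbitrarily small steps are stable for all cone fields of slope `s` at once. -/
lemma StronglyStable.exists_step {a21 a31 a32 b1 b2 b3 : ℝ}
    (H : StronglyStable a21 a31 a32 b1 b2 b3) (s : ℝ) {h₀ : ℝ} (hh₀ : 0 < h₀) :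
    ∃ h, 0 < h ∧ h ≤ h₀ ∧ ∀ (r a b c d : ℝ), r ≤ 1 → a ^ 2 + b ^ 2 ≤ 4 →
      rk3Step a21 a31 a32 b1 b2 b3 (bumpField s r !₂[a, b]) h !₂[1, 0] = !₂[c, d] →
      c ^ 2 + d ^ 2 ≤ 1 := by
  obtain ⟨τ, hτ, H⟩ := H (1 + 4 * |s|) (by positivity)
  refine ⟨min τ h₀, lt_min hτ hh₀, min_le_right _ _, fun r a b c d hr1 hp e => ?_⟩
  have hp' : ‖(!₂[a, b] : EuclideanSpace ℝ (Fin 2))‖ ≤ 2 := by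
    have := norm_sq_two !₂[a, b]
    simp at this
    nlinarith [norm_nonneg (!₂[a, b] : EuclideanSpace ℝ (Fin 2))]
  have h := H _ (inner_bumpField s r !₂[a, b]) (bumpField_lipschitz s hr1 hp') !₂[1, 0]
    (min τ h₀) (lt_min hτ hh₀) (min_le_left _ _)
  rw [e] at h
  have h2 := pow_le_pow_left₀ (norm_nonneg _) h 2
  rw [norm_sq_two, norm_sq_two] at h2
  simpa using h2

/-- The step in terms of the coordinates of the three stage slopes, for `u₀ = (1, 0)`. -/
lemma rk3Step_eq {a21 a31 a32 b1 b2 b3 h p1 q1 p2 q2 p3 q3 : ℝ}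
    {g : EuclideanSpace ℝ (Fin 2) → EuclideanSpace ℝ (Fin 2)}
    (e1 : g !₂[1, 0] = !₂[p1, q1])
    (e2 : g !₂[1 + h * (a21 * p1), h * (a21 * q1)] = !₂[p2, q2])
    (e3 : g !₂[1 + h * (a31 * p1 + a32 * p2), h * (a31 * q1 + a32 * q2)] = !₂[p3, q3]) :
    rk3Step a21 a31 a32 b1 b2 b3 g h !₂[1, 0]
      = !₂[1 + h * (b1 * p1 + b2 * p2 + b3 * p3), h * (b1 * q1 + b2 * q2 + b3 * q3)] := by
  have c2 : (!₂[1, 0] : EuclideanSpace ℝ (Fin 2)) + h • (a21 • !₂[p1, q1])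
      = !₂[1 + h * (a21 * p1), h * (a21 * q1)] := by
    ext i; fin_cases i <;> simp
  have c3 : (!₂[1, 0] : EuclideanSpace ℝ (Fin 2)) + h • (a31 • !₂[p1, q1] + a32 • !₂[p2, q2])
      = !₂[1 + h * (a31 * p1 + a32 * p2), h * (a31 * q1 + a32 * q2)] := by
    ext i; fin_cases i <;> simp <;> ring
  unfold rk3Step
  simp only [e1, c2, e2, c3, e3]
  ext i; fin_cases i <;> simp <;> ring

/-- The cone sits at the initial value; the other two stages stay away from it because
`a21 ≠ 0` and `a31 + a32 ≠ 0`. -/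
lemma case_start {a21 a31 a32 b1 b2 b3 : ℝ}
    (h1 : b1 + b2 + b3 = 1)
    (h2 : b2 * a21 + b3 * (a31 + a32) = 1 / 2)
    (h4 : b3 * a32 * a21 = 1 / 6)
    (H : StronglyStable a21 a31 a32 b1 b2 b3) (hc : a31 + a32 ≠ 0) :
    b1 = 0 ∧ b3 * a32 = 1 / 2 := by
  by_contra hcon
  have hβ : b1 ≠ 0 ∨ b1 ≠ 1 / 2 - b3 * a32 := by
    by_contra! hh
    exact hcon ⟨hh.1, by linarith [hh.1, hh.2]⟩
  obtain ⟨x, k, hk, hg⟩ := growth _ _ hβ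
  have ha : a21 ≠ 0 := by rintro rfl; norm_num at h4
  have hρ : 0 < min |a21| |a31 + a32| / 4 := by
    have := lt_min (abs_pos.2 ha) (abs_pos.2 hc); linarith
  set ρ := min |a21| |a31 + a32| / 4 with hρd
  have hρ1 : 4 * ρ ≤ |a21| := by have := min_le_left |a21| |a31 + a32|; linarith
  have hρ2 : 4 * ρ ≤ |a31 + a32| := by have := min_le_right |a21| |a31 + a32|; linarith
  -- `h ≤ 1 / M`, with `M` the sum below, gives `ρ h ≤ 1`, `|h x| ≤ 1/2` and `|a31 h x| ≤ ρ`: the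
  -- last two keep the other stages at distance at least `ρ h` from the initial value.
  have hM : 0 < ρ + 2 * |x| + |a31 * x| / ρ := by positivity
  obtain ⟨h, hh, hle, hst⟩ := H.exists_step (x / ρ) (lt_min hk (one_div_pos.2 hM))
  have hlt := hg h hh (hle.trans (min_le_left _ _))
  have hM' := (le_div_iff₀ hM).1 (hle.trans (min_le_right _ _))
  have i0 : 0 ≤ h * ρ := by positivity
  have i1 : 0 ≤ h * |x| := by positivity
  have i2 : 0 ≤ h * (|a31 * x| / ρ) := by positivity
  have hr1 : ρ * h ≤ 1 := by linarith
  have hx : |h * x| ≤ 1 / 2 := by rw [abs_mul, abs_of_pos hh]; linarith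
  have hax : |a31 * (h * x)| ≤ ρ := by
    have : h * (|a31 * x| / ρ) ≤ 1 := by linarith
    rw [← mul_div_assoc, div_le_one hρ] at this
    rwa [mul_left_comm, abs_mul, abs_of_pos hh]
  have hsr : x / ρ * (ρ * h) = h * x := by field_simp
  have hr : 0 ≤ ρ * h := by positivity
  have e1 := bumpField_self (x / ρ) hr 1 0
  rw [hsr] at e1
  set w := 1 + h * x with hw
  have f2 : ρ * h ≤ |h * (a21 * (w * 1)) - 0| := by
    have : 1 / 2 ≤ |w| := by
      have := (abs_le.1 hx).1
      exact le_trans (by linarith) (le_abs_self w)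
    rw [sub_zero, mul_one, abs_mul, abs_mul, abs_of_pos hh, mul_comm]
    have := mul_le_mul hρ1 this (by norm_num) (abs_nonneg _)
    exact mul_le_mul_of_nonneg_left (by linarith) hh.le
  have e2 := bumpField_far (x / ρ) (a := 1) (c := 1 + h * (a21 * -(w * 0))) f2
  have f3 : ρ * h ≤ |h * (a31 * (w * 1) + a32 * (1 + h * (a21 * -(w * 0)))) - 0| := by
    have e : h * (a31 * (w * 1) + a32 * (1 + h * (a21 * -(w * 0)))) - 0
        = h * ((a31 + a32) + a31 * (h * x)) := by rw [hw]; ring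
    rw [e, abs_mul, abs_of_pos hh, mul_comm]
    have := abs_sub_abs_le_abs_add (a31 + a32) (a31 * (h * x))
    exact mul_le_mul_of_nonneg_left (by linarith) hh.le
  have e3 := bumpField_far (x / ρ) (a := 1)
    (c := 1 + h * (a31 * -(w * 0) + a32 * -(h * (a21 * (w * 1))))) f3
  have hfin := hst _ _ _ _ _ hr1 (by norm_num) (rk3Step_eq e1 e2 e3)
  refine absurd hlt (not_lt.2 (le_of_eq_of_le ?_ hfin))
  congr 2
  · rw [hw]
    linear_combination (h ^ 2 * (1 + h * x)) * h2
  · rw [hw]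
    linear_combination -h * h1 + h ^ 3 * (1 + h * x) * h4

/-- The cone sits at the second stage `(1, 2 h / 3)`; the third stage is within `O(h ^ 2)` of the
initial value, since `a31 + a32 = 0`. -/
lemma case_second {a21 a31 a32 b1 b2 b3 : ℝ}
    (h1 : b1 + b2 + b3 = 1) (ha : a21 = 2 / 3) (hb : b2 = 3 / 4) (hba : b3 * a32 = 1 / 4)
    (hc : a31 + a32 = 0) :
    ¬ StronglyStable a21 a31 a32 b1 b2 b3 := by
  intro H
  obtain ⟨x, k, hk, hg⟩ := growth (3 / 4) (3 / 4) (Or.inl (by norm_num))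
  have hM : 0 < 1 + 3 * |a32 * x| := by positivity
  obtain ⟨h, hh, hle, hst⟩ := H.exists_step (3 * x) (lt_min hk (one_div_pos.2 hM))
  have hlt := hg h hh (hle.trans (min_le_left _ _))
  have hM' := (le_div_iff₀ hM).1 (hle.trans (min_le_right _ _))
  have i1 : 0 ≤ h * |a32 * x| := by positivity
  have hr1 : h / 3 ≤ 1 := by linarith
  have hr : 0 ≤ h / 3 := by positivity
  have hax : |a32 * (h * x)| ≤ 1 / 3 := by
    rw [mul_left_comm, abs_mul, abs_of_pos hh]; linarith
  have e1 : bumpField (3 * x) (h / 3) !₂[1, h * (2 / 3)] !₂[1, 0] = !₂[-0, 1] := by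
    apply bumpField_far
    rw [zero_sub, abs_neg, abs_of_pos (by positivity)]
    linarith
  have e2 := bumpField_self (3 * x) hr 1 (h * (2 / 3))
  have hsr : 3 * x * (h / 3) = h * x := by ring
  rw [hsr] at e2
  set w := 1 + h * x with hw
  have e2' : bumpField (3 * x) (h / 3) !₂[1, h * (2 / 3)] !₂[1 + h * (a21 * -0), h * (a21 * 1)]
      = !₂[-(w * (h * (2 / 3))), w * 1] := by
    rw [← e2, ha]; simp
  have f3 : h / 3 ≤ |h * (a31 * 1 + a32 * (w * 1)) - h * (2 / 3)| := by
    have e : h * (a31 * 1 + a32 * (w * 1)) - h * (2 / 3) = -(h * (2 / 3 - a32 * (h * x))) := by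
      rw [hw]; linear_combination h * hc
    have := (abs_le.1 hax).2
    rw [e, abs_neg, abs_mul, abs_of_pos hh]
    have h3 : 1 / 3 ≤ |2 / 3 - a32 * (h * x)| := le_trans (by linarith) (le_abs_self _)
    have := mul_le_mul_of_nonneg_left h3 hh.le
    linarith
  have e3 := bumpField_far (3 * x) (a := 1)
    (c := 1 + h * (a31 * -0 + a32 * -(w * (h * (2 / 3))))) f3
  have hh3 : h ≤ 3 := by linarith
  have hfin := hst _ _ _ _ _ hr1 (by nlinarith) (rk3Step_eq e1 e2' e3)
  refine absurd hlt (not_lt.2 (le_of_eq_of_le ?_ hfin))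
  congr 2
  · rw [hw]
    linear_combination (2 / 3 * h ^ 2 * (1 + h * x)) * hb + h ^ 2 * b3 * hc + h ^ 3 * x * hba
  · rw [hw]
    linear_combination -h * h1 - h ^ 2 * x * hb + 2 / 3 * h ^ 3 * (1 + h * x) * hba

/-- An explicit three-stage third-order Runge–Kutta method
that is strongly stable for all semibounded Lipschitz right-hand sides
(for every `L > 0` there is a `τ > 0` such that the step does not increase
the norm for all such `g`, all `u₀` and all `Δt ∈ (0, τ]`)
necessarily satisfies `7/8 ≤ a₃₁ + a₃₂ ≤ 5/4`. -/
theorem erk33_strong_stability_necessary_condition (a21 a31 a32 b1 b2 b3 : ℝ)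
    (h1 : b1 + b2 + b3 = 1)
    (h2 : b2 * a21 + b3 * (a31 + a32) = 1 / 2)
    (h3 : b2 * a21 ^ 2 + b3 * (a31 + a32) ^ 2 = 1 / 3)
    (h4 : b3 * a32 * a21 = 1 / 6)
    (hstable : ∀ L : ℝ, 0 < L → ∃ τ : ℝ, 0 < τ ∧
      ∀ g : EuclideanSpace ℝ (Fin 2) → EuclideanSpace ℝ (Fin 2),
        (∀ u, ⟪u, g u⟫ ≤ 0) →
        (∀ u v, ‖g u - g v‖ ≤ L * ‖u - v‖) →
        ∀ u₀ : EuclideanSpace ℝ (Fin 2), ∀ Δt : ℝ, 0 < Δt → Δt ≤ τ →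
          ‖rk3Step a21 a31 a32 b1 b2 b3 g Δt u₀‖ ≤ ‖u₀‖) :
    7 / 8 ≤ a31 + a32 ∧ a31 + a32 ≤ 5 / 4 := by
  have H : StronglyStable a21 a31 a32 b1 b2 b3 := hstable
  by_cases hc : a31 + a32 = 0
  · exfalso
    rw [hc] at h2 h3
    have ha : a21 = 2 / 3 := by linear_combination 2 * h3 - 2 * a21 * h2
    have hb : b2 = 3 / 4 := by rw [ha] at h2; linarith
    have hba : b3 * a32 = 1 / 4 := by rw [ha] at h4; linarith
    exact case_second h1 ha hb hba hc H
  · obtain ⟨hb, hba⟩ := case_start h1 h2 h4 H hc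
    have ha : a21 = 1 / 3 := by rw [hba] at h4; linarith
    subst ha hb
    have hb2 : b2 = 1 - b3 := by linarith
    subst hb2
    -- With `a21 = 1/3` and `b2 = 1 - b3`, the quadrature conditions determine `a31 + a32`.
    have e : a31 + a32 = 1 := by
      have p : b3 * (a31 + a32 - 1 / 3) = 1 / 6 := by linarith
      linear_combination 6 * h3 - 6 * (a31 + a32 + 1 / 3) * p
    rw [e]
    norm_num
end

section
/- Let H be a real inner product space, L > 0, and g : H → H a map with ⟨u, g(u)⟩ ≤ 0 for all u ∈ H and ‖g(u) − g(v)‖ ≤ L·‖u − v‖ for all u, v ∈ H. Let a₂₁, b₂ be real numbers with 0 ≤ b₂ ≤ 1 and 2·b₂·a₂₁ > 1, and set b₁ = 1 − b₂. Then for every u₀ ∈ H and every step size Δt with 0 < Δt ≤ (√((1 − a₂₁)² − (1 − 2b₂a₂₁)) − |1 − a₂₁|)/(b₂·a₂₁·L), the two-stage explicit Runge–Kutta step u₂ = u₀ + a₂₁Δt·g(u₀), u₊ = u₀ + Δt·(b₁ g(u₀) + b₂ g(u₂)) satisfies ‖u₊‖ ≤ ‖u₀‖. In particular, for b₁ = b₂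 = 1/2 and a₂₁ = 3/2, strong stability ‖u₊‖ ≤ ‖u₀‖ holds whenever 0 < Δt ≤ 2(√3 − 1)/(3L). -/
open scoped RealInnerProductSpace

/-!
Write `a = a₂₁`, `b = b₂`, `t = Δt`, `p = g u₀`, `q = g (u₀ + a t p)`, `d = q - p`.
Semiboundedness at `u₀` gives `⟪u₀, p⟫ ≤ 0`, and at the second stage it gives
`⟪u₀, q⟫ ≤ -a t ⟪p, q⟫`. Inserting both into the expansion of the squared norm,
`‖u₊‖² - ‖u₀‖² ≤ t² ((1 - 2ab) ‖p‖² + 2b(1 - a) ⟪p, d⟫ + b² ‖d‖²)`.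
The Lipschitz bound gives `b ‖d‖ ≤ x ‖p‖` with `x = a b t L`, so by Cauchy–Schwarz the bracket
is at most `(x² + 2 |1 - a| x + (1 - 2ab)) ‖p‖²`. The step size restriction says precisely that
`x` does not exceed the positive root of this quadratic.
-/

/-- The energy estimate: semiboundedness enters only through `hp` (first stage) and `hq` (second). -/
lemma energy_estimate {H : Type*} [NormedAddCommGroup H] [InnerProductSpace ℝ H]
    (u p q : H) (a b t : ℝ) (hb0 : 0 ≤ b) (hb1 : b ≤ 1) (ht : 0 < t)
    (hp : ⟪u, p⟫ ≤ 0) (hq : ⟪u + (a * t) • p, q⟫ ≤ 0) :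
    ‖u + t • ((1 - b) • p + b • q)‖ ^ 2 - ‖u‖ ^ 2 ≤
      t ^ 2 * ((1 - 2 * b * a) * ‖p‖ ^ 2 + 2 * (b * (1 - a) * ⟪p, q - p⟫)
        + (b * ‖q - p‖) ^ 2) := by
  have e1 : ‖u + t • ((1 - b) • p + b • q)‖ ^ 2 = ‖u‖ ^ 2
      + 2 * t * ((1 - b) * ⟪u, p⟫ + b * ⟪u, q⟫)
      + t ^ 2 * ((1 - b) ^ 2 * ‖p‖ ^ 2 + 2 * (1 - b) * b * ⟪p, q⟫ + b ^ 2 * ‖q‖ ^ 2) := by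
    simp only [← real_inner_self_eq_norm_sq, inner_add_left, inner_add_right,
      real_inner_smul_left, real_inner_smul_right, real_inner_comm u p, real_inner_comm u q,
      real_inner_comm p q]
    ring
  have e2 : ‖q - p‖ ^ 2 = ‖q‖ ^ 2 - 2 * ⟪p, q⟫ + ‖p‖ ^ 2 := by
    rw [norm_sub_sq_real, real_inner_comm]
  have e3 : ⟪p, q - p⟫ = ⟪p, q⟫ - ‖p‖ ^ 2 := by
    rw [inner_sub_right, real_inner_self_eq_norm_sq]
  rw [inner_add_left, real_inner_smul_left] at hq
  rw [e1, mul_pow, e2, e3]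
  have h1 : t * (1 - b) * ⟪u, p⟫ ≤ 0 :=
    mul_nonpos_of_nonneg_of_nonpos (mul_nonneg ht.le (by linarith)) hp
  have h2 : t * b * (⟪u, q⟫ + a * t * ⟪p, q⟫) ≤ 0 :=
    mul_nonpos_of_nonneg_of_nonpos (mul_nonneg ht.le hb0) hq
  linarith

/-- `x² + 2 c x + e` is nonpositive between `0` and its larger root. -/
lemma quadratic_nonpos {x c e : ℝ} (hx : 0 ≤ x) (hc : 0 ≤ c)
    (he : e ≤ 0) (h : x ≤ √(c ^ 2 - e) - c) : e + 2 * (c * x) + x ^ 2 ≤ 0 := by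
  have hs : √(c ^ 2 - e) ^ 2 = c ^ 2 - e := Real.sq_sqrt (by nlinarith)
  have := pow_le_pow_left₀ (by positivity : 0 ≤ x + c) (by linarith : x + c ≤ √(c ^ 2 - e)) 2
  linarith

lemma strongly_stable_general {H : Type*} [NormedAddCommGroup H] [InnerProductSpace ℝ H]
    (L : ℝ) (hL : 0 < L) (g : H → H)
    (hsb : ∀ u : H, ⟪u, g u⟫ ≤ 0)
    (hlip : ∀ u v : H, ‖g u - g v‖ ≤ L * ‖u - v‖)
    (a b : ℝ) (hb0 : 0 ≤ b) (hb1 : b ≤ 1) (hab : 1 < 2 * b * a)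
    (u : H) (t : ℝ) (ht : 0 < t)
    (hstep : t ≤ (√((1 - a) ^ 2 - (1 - 2 * b * a)) - |1 - a|) / (b * a * L)) :
    ‖u + t • ((1 - b) • g u + b • g (u + (a * t) • g u))‖ ≤ ‖u‖ := by
  have ha : 0 < a := by
    by_contra! h
    linarith [mul_nonpos_of_nonneg_of_nonpos hb0 h]
  have hba : 0 < b * a := by linarith
  have hE := energy_estimate u (g u) (g (u + (a * t) • g u)) a b t hb0 hb1 ht (hsb _) (hsb _)
  have hd := hlip (u + (a * t) • g u) u
  rw [add_sub_cancel_left, norm_smul, Real.norm_of_nonneg (by positivity)] at hd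
  set p := g u
  set d := g (u + (a * t) • p) - p
  rw [le_div_iff₀ (by positivity), ← sq_abs (1 - a)] at hstep
  have hx : 0 ≤ t * (b * a * L) := by positivity
  have hQ := quadratic_nonpos hx (abs_nonneg (1 - a)) (by linarith) hstep
  have hbd : b * ‖d‖ ≤ t * (b * a * L) * ‖p‖ := by
    linarith [mul_le_mul_of_nonneg_left hd hb0]
  have hsq : (b * ‖d‖) ^ 2 ≤ (t * (b * a * L) * ‖p‖) ^ 2 :=
    pow_le_pow_left₀ (by positivity) hbd 2
  have hcs : b * (1 - a) * ⟪p, d⟫ ≤ |1 - a| * (t * (b * a * L)) * ‖p‖ ^ 2 :=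
    calc b * (1 - a) * ⟪p, d⟫ ≤ |b * (1 - a) * ⟪p, d⟫| := le_abs_self _
      _ = b * |1 - a| * |⟪p, d⟫| := by rw [abs_mul, abs_mul, abs_of_nonneg hb0]
      _ ≤ b * |1 - a| * (‖p‖ * ‖d‖) := by gcongr; exact abs_real_inner_le_norm p d
      _ = |1 - a| * ‖p‖ * (b * ‖d‖) := by ring
      _ ≤ |1 - a| * ‖p‖ * (t * (b * a * L) * ‖p‖) := by gcongr
      _ = _ := by ring
  have hneg := mul_nonpos_of_nonpos_of_nonneg hQ (sq_nonneg ‖p‖)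
  have hB := mul_nonpos_of_nonneg_of_nonpos (sq_nonneg t)
    (by linarith : (1 - 2 * b * a) * ‖p‖ ^ 2 + 2 * (b * (1 - a) * ⟪p, d⟫)
      + (b * ‖d‖) ^ 2 ≤ 0)
  exact (sq_le_sq₀ (norm_nonneg _) (norm_nonneg _)).mp (by linarith)

/-- Let `g` be semibounded (`⟪u, g u⟫ ≤ 0`) and Lipschitz
continuous with constant `L > 0`. Any first-order two-stage explicit
Runge–Kutta method with `0 ≤ b₂ ≤ 1`, `b₁ = 1 − b₂` and `2 b₂ a₂₁ > 1` is
strongly stable under the step size restriction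
`0 < Δt ≤ (√((1 − a₂₁)² − (1 − 2b₂a₂₁)) − |1 − a₂₁|)/(b₂ a₂₁ L)`;
in particular, for `b₁ = b₂ = 1/2`, `a₂₁ = 3/2` strong stability holds for
`0 < Δt ≤ 2(√3 − 1)/(3L)`. -/
theorem first_order_ssp_strongly_stable
    {H : Type*} [NormedAddCommGroup H] [InnerProductSpace ℝ H]
    (L : ℝ) (hL : 0 < L) (g : H → H)
    (hsb : ∀ u : H, ⟪u, g u⟫ ≤ 0)
    (hlip : ∀ u v : H, ‖g u - g v‖ ≤ L * ‖u - v‖) :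
    (∀ a21 b2 : ℝ, 0 ≤ b2 → b2 ≤ 1 → 1 < 2 * b2 * a21 →
      ∀ u₀ : H, ∀ Δt : ℝ, 0 < Δt →
        Δt ≤ (Real.sqrt ((1 - a21) ^ 2 - (1 - 2 * b2 * a21)) - |1 - a21|)
              / (b2 * a21 * L) →
        ‖u₀ + Δt • ((1 - b2) • g u₀ + b2 • g (u₀ + (a21 * Δt) • g u₀))‖ ≤ ‖u₀‖)
    ∧ ∀ u₀ : H, ∀ Δt : ℝ, 0 < Δt → Δt ≤ 2 * (Real.sqrt 3 - 1) / (3 * L) →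
        ‖u₀ + Δt • ((1 / 2 : ℝ) • g u₀
            + (1 / 2 : ℝ) • g (u₀ + (3 / 2 * Δt) • g u₀))‖ ≤ ‖u₀‖ := by
  refine ⟨fun a b hb0 hb1 hab u t ht h =>
    strongly_stable_general L hL g hsb hlip a b hb0 hb1 hab u t ht h, fun u t ht h => ?_⟩
  have key := strongly_stable_general L hL g hsb hlip (3 / 2) (1 / 2) (by norm_num) (by norm_num)
    (by norm_num) u t ht
  rw [show (1 : ℝ) - 1 / 2 = 1 / 2 by norm_num] at key
  refine key (h.trans_eq ?_)
  have hs : √((1 - 3 / 2 : ℝ) ^ 2 - (1 - 2 * (1 / 2) * (3 / 2))) = √3 / 2 := by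
    rw [show ((1 - 3 / 2 : ℝ) ^ 2 - (1 - 2 * (1 / 2) * (3 / 2))) = 3 / 2 ^ 2 by norm_num,
      Real.sqrt_div' _ (by positivity), Real.sqrt_sq (by norm_num)]
  rw [hs, show |(1 - 3 / 2 : ℝ)| = 1 / 2 by norm_num [abs_of_neg]]
  field_simp
end
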